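/- The score of the parameter-driven likelihood with respect to the latent variance at τ = 0 (obtained by L'Hôpital's rule) is given explicitly as follows. Fix n ≥ 1, integers m_t ≥ 1 and 0 ≤ y_t ≤ m_t, vectors x_t ∈ ℝʳ, β ∈ ℝʳ, and an n × n symmetric positive-definite matrix R with unit diagonal entries. Define L(τ) = ∫_{ℝⁿ} exp( Σ_{t=1}^n [ y_t (x_tᵀβ + √τ α_t) − m_t b(x_tᵀβ + √τ α_t) ] ) dN(0, R)(α) for τ ≥ 0, where N(0, R) is the centered multivariate normal distribution with covariance R. Then the function τ ↦ log L(τ) is right-differentiable at τ = 0 and its right derivative equals (1/2) Σ_{t=1}^n [ e_t² − m_t b̈(x_tᵀβ) ] + (1/2) Σ_{t=1}^n Σ_{s≠t} e_t e_s R_{s,t}, where e_t = y_t − m_t ḃ(x_tᵀβ). -/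

import Mathlib

/-!
Put `c_t = x_tᵀβ` and, for a direction `a`, let `q(s) = ∑ (y_t (c_t + s a_t) - m_t b(c_t + s a_t))`,
so that `L(τ) = E[exp q(√τ)]` with `a = α` distributed as `N(0, R)`. The likelihood `φ = exp q`
along the ray satisfies `φ(s) = φ(0) + s φ'(0) + s² φ''(η) / 2` for some `η ∈ (0, s)`. The constant
`φ(0)` does not depend on `α`, the term `φ'(0) = φ(0) ∑ e_t α_t` is linear in `α` and has mean zero,
and `|φ''|` is bounded by a quadratic function of `α` since `φ ≤ 1`, `0 ≤ ḃ ≤ 1` and `0 ≤ b̈ ≤ 1`.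
Dominated convergence with `s = √τ` gives `L'(0+) = E[φ''(0)] / 2`
(`hasDerivWithinAt_integral_exp_rayLog`), where
`φ''(0) = φ(0) ((∑ e_t α_t)² - ∑ m_t b̈(c_t) α_t²)`; the covariances `E[α_s α_t] = R_{s,t}` then yield
the formula after division by `L(0) = φ(0)` (`integral_rayLik₂_zero`).

The moments of `N(0, R)` come from Mathlib's `multivariateGaussian`, which is defined as an image
measure; `integral_mul_mvnDens` identifies it with the explicit density `mvnDens R` by the linear
change of variables `α = √R z`.
-/


open MeasureTheory Real Finset Matrix

noncomputable section

/-- `b(w) = log(1 + e^w)`. -/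
def bfun (w : ℝ) : ℝ := Real.log (1 + Real.exp w)

/-- `ḃ(w) = e^w / (1 + e^w)`. -/
def bdot (w : ℝ) : ℝ := Real.exp w / (1 + Real.exp w)

/-- `b̈(w) = ḃ(w)(1 − ḃ(w))`. -/
def bddot (w : ℝ) : ℝ := bdot w * (1 - bdot w)

/-- The density of the centered multivariate normal `N(0, R)` on `ℝⁿ`:
`g(α, R) = (2π)^{−n/2} det(R)^{−1/2} exp(−(1/2) αᵀ R⁻¹ α)`. -/
def mvnDens {n : ℕ} (R : Matrix (Fin n) (Fin n) ℝ) (α : Fin n → ℝ) : ℝ :=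
  (2 * Real.pi) ^ (-(n : ℝ) / 2) * R.det ^ (-(1 : ℝ) / 2)
    * Real.exp (-(1 / 2) * (α ⬝ᵥ (R⁻¹ *ᵥ α)))

open ProbabilityTheory Filter Topology

/-! ### The Gaussian density -/

lemma pi_gaussianReal_eq_withDensity (n : ℕ) :
    Measure.pi (fun _ : Fin n => gaussianReal 0 1) =
      (volume : Measure (Fin n → ℝ)).withDensity
        (fun z => ENNReal.ofReal (∏ i, gaussianPDFReal 0 1 (z i))) := by
  refine Measure.pi_eq fun s hs => ?_
  rw [withDensity_apply _ (MeasurableSet.univ_pi hs), volume_pi, Measure.restrict_pi_pi]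
  rw [← ofReal_integral_eq_lintegral_ofReal]
  · rw [integral_fintype_prod_eq_prod (fun _ => gaussianPDFReal 0 1),
      ENNReal.ofReal_prod_of_nonneg]
    · exact Finset.prod_congr rfl fun i _ =>
        (gaussianReal_apply_eq_integral 0 one_ne_zero (s i)).symm
    · exact fun i _ => integral_nonneg fun z => gaussianPDFReal_nonneg 0 1 z
  · exact Integrable.fintype_prod (f := fun _ => gaussianPDFReal 0 1)
      fun i => (integrable_gaussianPDFReal 0 1).restrict
  · exact ae_of_all _ fun z => Finset.prod_nonneg fun i _ => gaussianPDFReal_nonneg 0 1 _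

lemma prod_gaussianPDFReal {n : ℕ} (z : Fin n → ℝ) :
    ∏ i, gaussianPDFReal 0 1 (z i) =
      (2 * π) ^ (-(n : ℝ) / 2) * Real.exp (-(1 / 2) * (z ⬝ᵥ z)) := by
  have h2 : (0 : ℝ) ≤ 2 * π := by positivity
  simp only [gaussianPDFReal, Finset.prod_mul_distrib, ← Real.exp_sum]
  congr 1
  · rw [Finset.prod_const, Finset.card_univ, Fintype.card_fin, NNReal.coe_one, mul_one,
      Real.sqrt_eq_rpow, ← Real.rpow_neg h2, ← Real.rpow_natCast, ← Real.rpow_mul h2]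
    congr 1; ring
  · simp only [dotProduct, Finset.mul_sum]
    congr 1
    refine Finset.sum_congr rfl fun i _ => ?_
    simp; ring

/-- Change of variables `α = A z` with `A` a symmetric square root of `R`: the density of `N(0, R)`
becomes the standard Gaussian density. -/
lemma abs_det_mul_mvnDens_mulVec {n : ℕ} {A R : Matrix (Fin n) (Fin n) ℝ} (hAs : Aᵀ = A)
    (hA : A * A = R) (hdet : A.det ≠ 0) (z : Fin n → ℝ) :
    |A.det| * mvnDens R (A *ᵥ z) = ∏ i, gaussianPDFReal 0 1 (z i) := by
  have hquad : (A *ᵥ z) ⬝ᵥ (R⁻¹ *ᵥ (A *ᵥ z)) = z ⬝ᵥ z := by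
    have hu : IsUnit A.det := isUnit_iff_ne_zero.2 hdet
    rw [← hA, Matrix.mul_inv_rev, mulVec_mulVec, Matrix.mul_assoc, Matrix.nonsing_inv_mul _ hu,
      Matrix.mul_one, ← vecMul_transpose, hAs, ← dotProduct_mulVec, mulVec_mulVec,
      Matrix.mul_nonsing_inv _ hu, one_mulVec]
  have hd : R.det ^ (-(1 : ℝ) / 2) = |A.det|⁻¹ := by
    rw [← hA, det_mul, ← abs_mul_abs_self, ← pow_two, ← Real.rpow_natCast,
      ← Real.rpow_mul (abs_nonneg _), ← Real.rpow_neg_one]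
    congr 1; norm_num
  have h0 : |A.det| ≠ 0 := abs_ne_zero.2 hdet
  rw [prod_gaussianPDFReal, mvnDens, hquad, hd]
  field_simp

open scoped MatrixOrder in
/-- Integration against the density `mvnDens R` is integration against Mathlib's
`multivariateGaussian 0 R`, whose moments are known. -/
lemma integral_mul_mvnDens {n : ℕ} {R : Matrix (Fin n) (Fin n) ℝ} (hR : R.PosDef)
    {f : (Fin n → ℝ) → ℝ} (hf : Continuous f) :
    ∫ α, f α * mvnDens R α = ∫ w, f (fun i => w i) ∂multivariateGaussian 0 R := by
  set A := CFC.sqrt R with hAdef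
  have hA : A * A = R := CFC.sqrt_mul_sqrt_self _ hR.posSemidef.nonneg
  have hAs : Aᵀ = A := by
    have := (CFC.sqrt_nonneg R).isSelfAdjoint
    rw [← conjTranspose_eq_transpose_of_trivial]; exact this
  have hdet : A.det ≠ 0 := by
    intro h
    have := hR.det_pos
    rw [← hA, det_mul, h] at this
    simp at this
  have hcont : Continuous fun z : Fin n → ℝ => A *ᵥ z := by fun_prop
  have hR1 : ∫ w, f (fun i => w i) ∂multivariateGaussian 0 R =
      ∫ z, f (A *ᵥ z) ∂Measure.pi (fun _ : Fin n => gaussianReal 0 1) := by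
    rw [multivariateGaussian, ← map_pi_eq_stdGaussian, Measure.map_map (by fun_prop) (by fun_prop),
      integral_map (by fun_prop)]
    · refine integral_congr_ae (ae_of_all _ fun z => ?_)
      simp only [Function.comp, zero_add]
      congr 1
    · exact (hf.comp (by fun_prop)).aestronglyMeasurable
  have hvol : (volume : Measure (Fin n → ℝ)) =
      ENNReal.ofReal |A.det| • Measure.map (fun z => A *ᵥ z) volume := by
    have := Real.map_matrix_volume_pi_eq_smul_volume_pi hdet
    have h2 : Measure.map (fun z => A *ᵥ z) volume =
      ENNReal.ofReal |A.det⁻¹| • (volume : Measure (Fin n → ℝ)) := this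
    rw [h2, smul_smul, ← ENNReal.ofReal_mul (abs_nonneg _), ← abs_mul, mul_inv_cancel₀ hdet]
    simp
  have hdens : Continuous (mvnDens R) := by unfold mvnDens; fun_prop
  rw [hR1, pi_gaussianReal_eq_withDensity, integral_withDensity_eq_integral_toReal_smul]
  · conv_lhs => rw [hvol]
    rw [integral_smul_measure, integral_map (by fun_prop) (by fun_prop), smul_eq_mul,
      ← integral_const_mul]
    refine integral_congr_ae (ae_of_all _ fun z => ?_)
    simp only [smul_eq_mul]
    rw [← abs_det_mul_mvnDens_mulVec hAs hA hdet, ENNReal.toReal_ofReal (abs_nonneg _),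
      ENNReal.toReal_ofReal]
    · ring
    · rw [abs_det_mul_mvnDens_mulVec hAs hA hdet]
      exact Finset.prod_nonneg fun i _ => gaussianPDFReal_nonneg 0 1 _
  · fun_prop
  · exact ae_of_all _ fun z => ENNReal.ofReal_lt_top

/-! ### The function `b` and Taylor expansion -/

lemma hasDerivAt_bfun (w : ℝ) : HasDerivAt bfun (bdot w) w :=
  ((Real.hasDerivAt_exp w).const_add 1).log (by positivity)

lemma hasDerivAt_bdot (w : ℝ) : HasDerivAt bdot (bddot w) w := by
  have h := (Real.hasDerivAt_exp w).div ((Real.hasDerivAt_exp w).const_add 1)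
    (by positivity : 1 + Real.exp w ≠ 0)
  refine h.congr_deriv ?_
  unfold bddot bdot
  field_simp

lemma bdot_nonneg (w : ℝ) : 0 ≤ bdot w := by unfold bdot; positivity

lemma bdot_le_one (w : ℝ) : bdot w ≤ 1 := by
  unfold bdot
  rw [div_le_one (by positivity)]
  linarith

lemma bddot_nonneg (w : ℝ) : 0 ≤ bddot w :=
  mul_nonneg (bdot_nonneg w) (sub_nonneg.2 (bdot_le_one w))

lemma bddot_le_one (w : ℝ) : bddot w ≤ 1 :=
  mul_le_one₀ (bdot_le_one w) (sub_nonneg.2 (bdot_le_one w)) (by linarith [bdot_nonneg w])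

lemma continuous_bfun : Continuous bfun :=
  continuous_iff_continuousAt.2 fun w => (hasDerivAt_bfun w).continuousAt

lemma continuous_bdot : Continuous bdot :=
  continuous_iff_continuousAt.2 fun w => (hasDerivAt_bdot w).continuousAt

lemma continuous_bddot : Continuous bddot := by
  unfold bddot
  exact continuous_bdot.mul (continuous_const.sub continuous_bdot)

/-- Since `0 ≤ b(w)` and `w ≤ b(w)`, each likelihood factor is at most `1`. -/
lemma mul_sub_mul_bfun_nonpos {y m : ℕ} (h : y ≤ m) (w : ℝ) :
    (y : ℝ) * w - m * bfun w ≤ 0 := by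
  have h0 : 0 ≤ bfun w := Real.log_nonneg (by linarith [Real.exp_pos w])
  have h1 : w ≤ bfun w := by
    rw [bfun, Real.le_log_iff_exp_le (by positivity)]
    linarith
  have hy : (0 : ℝ) ≤ y := y.cast_nonneg
  have hm : (y : ℝ) ≤ m := by exact_mod_cast h
  nlinarith

/-- Second-order Taylor expansion at `0` with Lagrange remainder, stated for explicit derivatives. -/
lemma exists_taylor_two {f f' f'' : ℝ → ℝ} (hf : ∀ x, HasDerivAt f (f' x) x)
    (hf' : ∀ x, HasDerivAt f' (f'' x) x) {s : ℝ} (hs : 0 < s) :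
    ∃ η ∈ Set.Ioo 0 s, f s - f 0 - s * f' 0 = s ^ 2 * (f'' η / 2) := by
  have hg : ∀ x, HasDerivAt (fun x => f x - x * f' 0) (f' x - f' 0) x := fun x => by
    simpa using (hf x).fun_sub ((hasDerivAt_id x).mul_const (f' 0))
  have hsq : ∀ x : ℝ, HasDerivAt (fun x : ℝ => x ^ 2) (2 * x) x := fun x => by
    simpa using hasDerivAt_pow 2 x
  obtain ⟨ξ, hξ, h1⟩ := exists_ratio_hasDerivAt_eq_ratio_slope
    (fun x => f x - x * f' 0) (fun x => f' x - f' 0) hs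
    (fun x _ => (hg x).continuousAt.continuousWithinAt) (fun x _ => hg x)
    (fun x : ℝ => x ^ 2) (fun x => 2 * x)
    (fun x _ => (hsq x).continuousAt.continuousWithinAt) (fun x _ => hsq x)
  obtain ⟨η, hη, h2⟩ := exists_hasDerivAt_eq_slope f' f'' hξ.1
    (fun x _ => (hf' x).continuousAt.continuousWithinAt) (fun x _ => hf' x)
  refine ⟨η, ⟨hη.1, hη.2.trans hξ.2⟩, ?_⟩
  have hξ0 : ξ ≠ 0 := hξ.1.ne'
  rw [sub_zero, eq_div_iff hξ0] at h2
  have : ξ * (f s - f 0 - s * f' 0 - s ^ 2 * (f'' η / 2)) = 0 := by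
    linear_combination (-1 / 2) * h1 - (s ^ 2 / 2) * h2
  rcases mul_eq_zero.1 this with h | h
  · exact absurd h hξ0
  · linarith

/-! ### The likelihood along a ray -/

section Ray

variable {n : ℕ} (m y : Fin n → ℕ) (c a : Fin n → ℝ) (s : ℝ)

/-- The log-likelihood at `c + s a`, as a function of the position `s` on the ray with
direction `a`. -/
def rayLog : ℝ := ∑ t, ((y t : ℝ) * (c t + s * a t) - (m t : ℝ) * bfun (c t + s * a t))

/-- The first derivative of `rayLog` in `s`. -/
def rayLog₁ : ℝ := ∑ t, ((y t : ℝ) - (m t : ℝ) * bdot (c t + s * a t)) * a t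

/-- The second derivative of `rayLog` in `s`. -/
def rayLog₂ : ℝ := -∑ t, (m t : ℝ) * bddot (c t + s * a t) * a t ^ 2

/-- The second derivative of the likelihood `exp (rayLog …)` in `s`. -/
def rayLik₂ : ℝ :=
  Real.exp (rayLog m y c a s) * (rayLog₁ m y c a s ^ 2 + rayLog₂ m c a s)

lemma hasDerivAt_rayLog : HasDerivAt (rayLog m y c a) (rayLog₁ m y c a s) s := by
  unfold rayLog rayLog₁
  refine HasDerivAt.fun_sum fun t _ => ?_
  have hl : HasDerivAt (fun s => c t + s * a t) (a t) s := by
    simpa using ((hasDerivAt_id s).mul_const (a t)).const_add (c t)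
  refine ((hl.const_mul (y t : ℝ)).fun_sub
    (((hasDerivAt_bfun (c t + s * a t)).comp s hl).const_mul (m t : ℝ))).congr_deriv ?_
  ring

lemma hasDerivAt_rayLog₁ : HasDerivAt (rayLog₁ m y c a) (rayLog₂ m c a s) s := by
  unfold rayLog₁ rayLog₂
  rw [← Finset.sum_neg_distrib]
  refine HasDerivAt.fun_sum fun t _ => ?_
  have hl : HasDerivAt (fun s => c t + s * a t) (a t) s := by
    simpa using ((hasDerivAt_id s).mul_const (a t)).const_add (c t)
  refine (((((hasDerivAt_bdot (c t + s * a t)).comp s hl).const_mul (m t : ℝ)).const_sub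
    (y t : ℝ)).mul_const (a t)).congr_deriv ?_
  ring

lemma continuous_rayLik₂ : Continuous (rayLik₂ m y c a) := by
  have := continuous_bfun
  have := continuous_bdot
  have := continuous_bddot
  unfold rayLik₂ rayLog rayLog₁ rayLog₂
  fun_prop

lemma exists_taylor_ray {s : ℝ} (hs : 0 < s) :
    ∃ η ∈ Set.Ioo 0 s, Real.exp (rayLog m y c a s) - Real.exp (rayLog m y c a 0)
      - s * (Real.exp (rayLog m y c a 0) * rayLog₁ m y c a 0)
        = s ^ 2 * (rayLik₂ m y c a η / 2) := by
  refine exists_taylor_two (f := fun s => Real.exp (rayLog m y c a s))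
    (f' := fun s => Real.exp (rayLog m y c a s) * rayLog₁ m y c a s)
    (fun x => (hasDerivAt_rayLog m y c a x).exp) (fun x => ?_) hs
  refine ((hasDerivAt_rayLog m y c a x).exp.fun_mul
    (hasDerivAt_rayLog₁ m y c a x)).congr_deriv ?_
  unfold rayLik₂
  ring

variable {m y}

lemma exp_rayLog_le_one (hy : ∀ t, y t ≤ m t) : Real.exp (rayLog m y c a s) ≤ 1 :=
  Real.exp_le_one_iff.2 (Finset.sum_nonpos fun t _ => mul_sub_mul_bfun_nonpos (hy t) _)

/-- A bound on the second derivative along the ray that is uniform in `s` and quadratic in the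
direction `a`; this is the dominating function. -/
lemma abs_rayLik₂_le (hy : ∀ t, y t ≤ m t) :
    |rayLik₂ m y c a s| ≤ (∑ t, (m t : ℝ) * |a t|) ^ 2 + ∑ t, (m t : ℝ) * a t ^ 2 := by
  have h1 : |rayLog₁ m y c a s| ≤ ∑ t, (m t : ℝ) * |a t| := by
    refine (Finset.abs_sum_le_sum_abs _ _).trans (Finset.sum_le_sum fun t _ => ?_)
    rw [abs_mul]
    refine mul_le_mul_of_nonneg_right ?_ (abs_nonneg _)
    have h0 := bdot_nonneg (c t + s * a t)
    have h0' := bdot_le_one (c t + s * a t)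
    have hyt : (0 : ℝ) ≤ y t := Nat.cast_nonneg _
    have hmt : (y t : ℝ) ≤ m t := by exact_mod_cast hy t
    rw [abs_le]
    constructor <;> nlinarith
  have h2 : |rayLog₂ m c a s| ≤ ∑ t, (m t : ℝ) * a t ^ 2 := by
    rw [rayLog₂, abs_neg]
    refine (Finset.abs_sum_le_sum_abs _ _).trans (Finset.sum_le_sum fun t _ => ?_)
    rw [abs_of_nonneg (by have := bddot_nonneg (c t + s * a t); positivity)]
    refine mul_le_mul_of_nonneg_right ?_ (sq_nonneg _)
    exact mul_le_of_le_one_right (Nat.cast_nonneg _) (bddot_le_one _)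
  rw [rayLik₂, abs_mul, abs_of_pos (Real.exp_pos _)]
  refine (mul_le_of_le_one_left (abs_nonneg _) (exp_rayLog_le_one c a s hy)).trans ?_
  refine (abs_add_le _ _).trans (add_le_add ?_ h2)
  rw [abs_pow]
  exact pow_le_pow_left₀ (abs_nonneg _) h1 2

end Ray

/-! ### Expansion of the integrated likelihood -/

/-- Right derivative at `0` in the latent variance `τ`, for an arbitrary centered square-integrable
latent vector `X`. The difference quotient in `τ` is, after subtracting the mean-zero first-order
term, a second-order Taylor remainder in `s = √τ` divided by `s²`; it converges pointwise to half
the second derivative and is dominated through `abs_rayLik₂_le`. -/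
lemma hasDerivWithinAt_integral_exp_rayLog {Ω : Type*} [MeasurableSpace Ω] {P : Measure Ω}
    [IsProbabilityMeasure P] {n : ℕ} {m y : Fin n → ℕ} (hy : ∀ t, y t ≤ m t) (c : Fin n → ℝ)
    {X : Fin n → Ω → ℝ} (hXm : ∀ t, Measurable (X t)) (hX : ∀ t, MemLp (X t) 2 P)
    (hX0 : ∀ t, ∫ ω, X t ω ∂P = 0) :
    HasDerivWithinAt (fun τ => ∫ ω, Real.exp (rayLog m y c (fun t => X t ω) √τ) ∂P)
      (∫ ω, rayLik₂ m y c (fun t => X t ω) 0 / 2 ∂P) (Set.Ici 0) 0 := by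
  have hb := continuous_bfun.measurable
  have hXi : ∀ t, Integrable (X t) P := fun t => (hX t).integrable one_le_two
  have hmeas : ∀ s, Measurable fun ω => Real.exp (rayLog m y c (fun t => X t ω) s) := fun s => by
    unfold rayLog
    fun_prop
  have hint : ∀ s, Integrable (fun ω => Real.exp (rayLog m y c (fun t => X t ω) s)) P := fun s =>
    Integrable.of_bound (hmeas s).aestronglyMeasurable 1 (ae_of_all _ fun ω => by
      rw [Real.norm_of_nonneg (Real.exp_pos _).le]
      exact exp_rayLog_le_one c _ s hy)
  -- The first-order term of the expansion at `0`; it has mean zero.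
  set D : Ω → ℝ := fun ω =>
    Real.exp (rayLog m y c (fun t => X t ω) 0) * rayLog₁ m y c (fun t => X t ω) 0 with hD
  have hDeq : D = fun ω => ∑ t, (Real.exp (rayLog m y c 0 0) *
      ((y t : ℝ) - (m t : ℝ) * bdot (c t))) * X t ω := by
    funext ω
    simp [hD, rayLog, rayLog₁, Finset.mul_sum, mul_assoc]
  have hDint : Integrable D P := by
    rw [hDeq]
    exact integrable_finsetSum _ fun t _ => (hXi t).const_mul _
  have hDzero : ∫ ω, D ω ∂P = 0 := by
    rw [hDeq, integral_finsetSum _ fun t _ => (hXi t).const_mul _]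
    simp [integral_const_mul, hX0]
  have hbound : Integrable (fun ω => ((∑ t, (m t : ℝ) * |X t ω|) ^ 2
      + ∑ t, (m t : ℝ) * X t ω ^ 2) / 2) P := by
    refine Integrable.div_const (Integrable.add ?_ ?_) 2
    · have : MemLp (fun ω => ∑ t, (m t : ℝ) * |X t ω|) 2 P :=
        memLp_finsetSum _ fun t _ => (hX t).abs.const_mul _
      exact this.integrable_sq
    · exact integrable_finsetSum _ fun t _ => (hX t).integrable_sq.const_mul _
  rw [← hasDerivWithinAt_Ioi_iff_Ici, hasDerivWithinAt_iff_tendsto_slope' Set.self_notMem_Ioi]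
  have key : Tendsto (fun τ : ℝ => ∫ ω, (Real.exp (rayLog m y c (fun t => X t ω) √τ)
      - Real.exp (rayLog m y c (fun t => X t ω) 0) - √τ * D ω) / τ ∂P) (𝓝[>] 0)
      (𝓝 (∫ ω, rayLik₂ m y c (fun t => X t ω) 0 / 2 ∂P)) := by
    refine tendsto_integral_filter_of_dominated_convergence _ ?_ ?_ hbound ?_
    · exact Eventually.of_forall fun τ =>
        ((((hint _).sub (hint 0)).sub (hDint.const_mul _)).div_const _).aestronglyMeasurable
    · filter_upwards [self_mem_nhdsWithin] with τ (hτ : 0 < τ)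
      refine ae_of_all _ fun ω => ?_
      obtain ⟨η, -, h⟩ := exists_taylor_ray m y c (fun t => X t ω) (Real.sqrt_pos.2 hτ)
      rw [h, Real.sq_sqrt hτ.le, mul_div_cancel_left₀ _ hτ.ne', Real.norm_eq_abs, abs_div,
        abs_of_pos (two_pos : (0 : ℝ) < 2)]
      have := abs_rayLik₂_le c (fun t => X t ω) η hy
      gcongr
    · refine ae_of_all _ fun ω => ?_
      choose! η hη h using fun s => exists_taylor_ray m y c (fun t => X t ω) (s := s)
      have hsq : Tendsto (fun τ : ℝ => √τ) (𝓝[>] 0) (𝓝 0) := by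
        have := (Real.continuous_sqrt.tendsto 0).mono_left (nhdsWithin_le_nhds (s := Set.Ioi 0))
        simpa using this
      have hη0 : Tendsto (fun τ : ℝ => η √τ) (𝓝[>] 0) (𝓝 0) := by
        refine tendsto_of_tendsto_of_tendsto_of_le_of_le' tendsto_const_nhds hsq ?_ ?_
        · filter_upwards [self_mem_nhdsWithin] with τ (hτ : 0 < τ)
          exact (hη _ (Real.sqrt_pos.2 hτ)).1.le
        · filter_upwards [self_mem_nhdsWithin] with τ (hτ : 0 < τ)
          exact (hη _ (Real.sqrt_pos.2 hτ)).2.le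
      refine ((((continuous_rayLik₂ m y c fun t => X t ω).tendsto 0).comp hη0).div_const
        2).congr' ?_
      filter_upwards [self_mem_nhdsWithin] with τ (hτ : 0 < τ)
      rw [hD, h _ (Real.sqrt_pos.2 hτ), Real.sq_sqrt hτ.le, mul_div_cancel_left₀ _ hτ.ne']
      rfl
  refine key.congr' ?_
  filter_upwards [self_mem_nhdsWithin] with τ (hτ : 0 < τ)
  have hI : Integrable (fun ω => Real.exp (rayLog m y c (fun t => X t ω) √τ)
      - Real.exp (rayLog m y c (fun t => X t ω) 0)) P := (hint _).sub (hint 0)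
  rw [integral_div, integral_sub hI (hDint.const_mul _),
    integral_sub (hint _) (hint 0), integral_const_mul, hDzero, slope_def_field]
  simp

/-- The expected second derivative at `s = 0` only involves the second moments of the latent
vector. -/
lemma integral_rayLik₂_zero {Ω : Type*} [MeasurableSpace Ω] {P : Measure Ω}
    {n : ℕ} (m y : Fin n → ℕ) (c : Fin n → ℝ)
    {X : Fin n → Ω → ℝ} (hX : ∀ t, MemLp (X t) 2 P) {R : Matrix (Fin n) (Fin n) ℝ}
    (hR : ∀ s t, ∫ ω, X s ω * X t ω ∂P = R s t) (hdiag : ∀ t, R t t = 1)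
    {e : Fin n → ℝ} (he : ∀ t, e t = (y t : ℝ) - (m t : ℝ) * bdot (c t)) :
    ∫ ω, rayLik₂ m y c (fun t => X t ω) 0 / 2 ∂P = Real.exp (rayLog m y c 0 0) *
      ((1 / 2 : ℝ) * ∑ t, ((e t) ^ 2 - (m t : ℝ) * bddot (c t))
        + (1 / 2 : ℝ) * ∑ t, ∑ s ∈ Finset.univ.erase t, e t * e s * R s t) := by
  have hi : ∀ s t, Integrable (fun ω => X s ω * X t ω) P := fun s t =>
    (hX s).integrable_mul (hX t)
  have hexp : ∀ ω, rayLik₂ m y c (fun t => X t ω) 0 / 2 = Real.exp (rayLog m y c 0 0) / 2 *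
      (∑ t, ∑ s, e t * e s * (X s ω * X t ω)
        - ∑ t, (m t : ℝ) * bddot (c t) * (X t ω * X t ω)) := by
    intro ω
    have h1 : rayLog₁ m y c (fun t => X t ω) 0 = ∑ t, e t * X t ω := by
      simp [rayLog₁, he]
    have h2 : rayLog m y c (fun t => X t ω) 0 = rayLog m y c 0 0 := by simp [rayLog]
    have h3 : (∑ t, e t * X t ω) ^ 2 = ∑ t, ∑ s, e t * e s * (X s ω * X t ω) := by
      rw [pow_two, Finset.sum_mul_sum]
      exact Finset.sum_congr rfl fun t _ => Finset.sum_congr rfl fun s _ => by ring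
    rw [rayLik₂, h1, h2, h3, rayLog₂]
    simp only [zero_mul, add_zero, pow_two]
    ring
  simp_rw [hexp]
  rw [integral_const_mul, integral_sub, integral_finsetSum, integral_finsetSum]
  · have hin : ∀ t, ∫ ω, ∑ s, e t * e s * (X s ω * X t ω) ∂P = ∑ s, e t * e s * R s t := by
      intro t
      rw [integral_finsetSum _ fun s _ => (hi s t).const_mul _]
      simp_rw [integral_const_mul, hR]
    simp_rw [hin, integral_const_mul, hR, hdiag]
    have hsplit : ∀ t, ∑ s, e t * e s * R s t =
        e t ^ 2 + ∑ s ∈ Finset.univ.erase t, e t * e s * R s t := by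
      intro t
      rw [← Finset.add_sum_erase _ _ (Finset.mem_univ t), hdiag]
      ring
    simp_rw [hsplit, Finset.sum_add_distrib, Finset.sum_sub_distrib, mul_one]
    ring
  · exact fun t _ => (hi t t).const_mul _
  · exact fun t _ => integrable_finsetSum _ fun s _ => (hi s t).const_mul _
  · exact integrable_finsetSum _ fun t _ => integrable_finsetSum _ fun s _ => (hi s t).const_mul _
  · exact integrable_finsetSum _ fun t _ => (hi t t).const_mul _

/-- The score of the parameter-driven likelihood with respect to the latent
variance at `τ = 0`: with
`L(τ) = ∫_{ℝⁿ} exp( Σ_t [ y_t (x_tᵀβ + √τ α_t) − m_t b(x_tᵀβ + √τ α_t) ] ) dN(0,R)(α)`,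
the function `τ ↦ log L(τ)` is right-differentiable at `τ = 0` with right derivative
`(1/2) Σ_t [e_t² − m_t b̈(x_tᵀβ)] + (1/2) Σ_t Σ_{s≠t} e_t e_s R_{s,t}`,
where `e_t = y_t − m_t ḃ(x_tᵀβ)`. -/
theorem statement2 (n r : ℕ) (hn : 1 ≤ n)
    (m : Fin n → ℕ) (hm : ∀ t, 1 ≤ m t)
    (y : Fin n → ℕ) (hy : ∀ t, y t ≤ m t)
    (x : Fin n → Fin r → ℝ) (β : Fin r → ℝ)
    (R : Matrix (Fin n) (Fin n) ℝ) (hRsymm : R.IsSymm) (hRpos : R.PosDef)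
    (hRdiag : ∀ t, R t t = 1)
    (L : ℝ → ℝ)
    (hL : ∀ τ, L τ = ∫ α : Fin n → ℝ,
        Real.exp (∑ t, ((y t : ℝ) * (x t ⬝ᵥ β + Real.sqrt τ * α t)
          - (m t : ℝ) * bfun (x t ⬝ᵥ β + Real.sqrt τ * α t))) * mvnDens R α)
    (e : Fin n → ℝ) (he : ∀ t, e t = (y t : ℝ) - (m t : ℝ) * bdot (x t ⬝ᵥ β)) :
    HasDerivWithinAt (fun τ => Real.log (L τ))
      ((1 / 2 : ℝ) * ∑ t, ((e t) ^ 2 - (m t : ℝ) * bddot (x t ⬝ᵥ β))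
        + (1 / 2 : ℝ) * ∑ t, ∑ s ∈ Finset.univ.erase t, e t * e s * R s t)
      (Set.Ici 0) 0 := by
  set c : Fin n → ℝ := fun t => x t ⬝ᵥ β with hc
  set P := multivariateGaussian 0 R with hP
  have hmem : ∀ t, MemLp (fun w : EuclideanSpace ℝ (Fin n) => w t) 2 P := fun t =>
    (EuclideanSpace.proj (𝕜 := ℝ) t).comp_memLp' IsGaussian.memLp_two_id
  have hmean : ∀ t, ∫ w, w t ∂P = 0 := fun t => by
    have h := (EuclideanSpace.proj (𝕜 := ℝ) t).integral_comp_id_comm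
      (IsGaussian.integrable_id (μ := P))
    simpa [hP] using h
  have hcov : ∀ s t, ∫ w, w s * w t ∂P = R s t := fun s t => by
    have h := covariance_eval_multivariateGaussian (μ := 0) hRpos.posSemidef s t
    rw [← hP, covariance_eq_sub (hmem s) (hmem t), hmean s, zero_mul, sub_zero] at h
    exact h
  have hLeq : L = fun τ => ∫ w, Real.exp (rayLog m y c (fun t => w t) √τ) ∂P := by
    funext τ
    have hcont : Continuous fun a : Fin n → ℝ => Real.exp (rayLog m y c a √τ) := by
      have := continuous_bfun
      unfold rayLog
      fun_prop
    rw [hL, hP, ← integral_mul_mvnDens hRpos hcont]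
    rfl
  have hL0 : L 0 = Real.exp (rayLog m y c 0 0) := by
    rw [hLeq]
    simp [rayLog]
  have hd := hasDerivWithinAt_integral_exp_rayLog hy c
    (X := fun t (w : EuclideanSpace ℝ (Fin n)) => w t) (P := P) (fun t => by fun_prop) hmem hmean
  rw [← hLeq, integral_rayLik₂_zero m y c hmem hcov hRdiag he, ← hL0] at hd
  have hne : L 0 ≠ 0 := hL0 ▸ (Real.exp_pos _).ne'
  exact (hd.log hne).congr_deriv (mul_div_cancel_left₀ _ hne)

end
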